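/- Let (P, C, ψ, e, ψ^C) be entwining data, M = P^{coC}_e, and Φ : C → P convolution invertible with Φ(e) = 1 and ψ∘(id_C ⊗ Φ) = (Φ ⊗ id_C)∘ψ^C. Define ρ(c ⊗ u) = Φ(c₍₁₎) u_α Φ⁻¹(c₍₂₎^α) and σ(b ⊗ c) = Φ(b₍₁₎) Φ(c_A) Φ⁻¹(b₍₂₎^A). Then (ρ, σ) satisfy conditions (i)–(iv) of crossed product data, and the resulting crossed product M ×_Φ C with product (x ⊗ b)(y ⊗ c) = x Φ(b₍₁₎) y_α Φ(c_A) Φ⁻¹(b₍₂₎^{αA}₍₁₎) ⊗ b₍₂₎^{αA}₍₂₎ is an associative algebra isomorphic to P via Θ(x ⊗ c) = x Φ(c), with inverse Θ⁻¹(u) = u_α Φ⁻¹(e^α₍₁₎) ⊗ e^α₍₂₎. -/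

import Mathlib

open TensorProduct LinearMap

noncomputable section

namespace Entwine

variable (k : Type) [Field k] (P : Type) [Ring P] [Algebra k P]
  (C : Type) [AddCommGroup C] [Module k C] [Coalgebra k C]

/-- coproduct of `C` -/
abbrev Δ : C →ₗ[k] C ⊗[k] C := Coalgebra.comul
/-- counit of `C` -/
abbrev ε : C →ₗ[k] k := Coalgebra.counit
/-- multiplication of `P` -/
abbrev μ : P ⊗[k] P →ₗ[k] P := LinearMap.mul' k P

variable (ψ : C ⊗[k] P →ₗ[k] P ⊗[k] C)

/-- entwining axiom `ψ∘(id⊗μ) = (μ⊗id)∘ψ₂₃∘ψ₁₂` -/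
def AxMul : Prop :=
  ψ ∘ₗ map LinearMap.id (μ k P) =
    map (μ k P) LinearMap.id
      ∘ₗ (TensorProduct.assoc k P P C).symm.toLinearMap
      ∘ₗ map LinearMap.id ψ
      ∘ₗ (TensorProduct.assoc k P C P).toLinearMap
      ∘ₗ map ψ LinearMap.id
      ∘ₗ (TensorProduct.assoc k C P P).symm.toLinearMap

/-- entwining axiom `ψ(c ⊗ 1) = 1 ⊗ c` -/
def AxOne : Prop := ∀ c : C, ψ (c ⊗ₜ (1 : P)) = (1 : P) ⊗ₜ c

/-- entwining axiom `(id⊗Δ)∘ψ = ψ₁₂∘ψ₂₃∘(Δ⊗id)` -/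
def AxComul : Prop :=
  map LinearMap.id (Δ k C) ∘ₗ ψ =
    (TensorProduct.assoc k P C C).toLinearMap
      ∘ₗ map ψ LinearMap.id
      ∘ₗ (TensorProduct.assoc k C P C).symm.toLinearMap
      ∘ₗ map LinearMap.id ψ
      ∘ₗ (TensorProduct.assoc k C C P).toLinearMap
      ∘ₗ map (Δ k C) LinearMap.id

/-- entwining axiom `(id⊗ε)∘ψ = ε⊗id` -/
def AxCounit : Prop :=
  (TensorProduct.rid k P).toLinearMap ∘ₗ map LinearMap.id (ε k C) ∘ₗ ψ =
    (TensorProduct.lid k P).toLinearMap ∘ₗ map (ε k C) LinearMap.id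

/-- `ψ` is an entwining map for the algebra `P` and the coalgebra `C` -/
def IsEntwining : Prop :=
  AxMul k P C ψ ∧ AxOne k P C ψ ∧ AxComul k P C ψ ∧ AxCounit k P C ψ

variable (e : C)

/-- `e` is a group-like element -/
def IsGrouplike : Prop :=
  Δ k C e = e ⊗ₜ[k] e ∧ ε k C e = 1

variable (ψC : C ⊗[k] C →ₗ[k] C ⊗[k] C)

/-- `(id⊗Δ)∘ψ^C = ψ^C₁₂∘ψ^C₂₃∘(Δ⊗id)` -/
def AxPsiCComul : Prop :=
  map LinearMap.id (Δ k C) ∘ₗ ψC =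
    (TensorProduct.assoc k C C C).toLinearMap
      ∘ₗ map ψC LinearMap.id
      ∘ₗ (TensorProduct.assoc k C C C).symm.toLinearMap
      ∘ₗ map LinearMap.id ψC
      ∘ₗ (TensorProduct.assoc k C C C).toLinearMap
      ∘ₗ map (Δ k C) LinearMap.id

/-- `(id⊗ε)∘ψ^C = ε⊗id` -/
def AxPsiCCounit : Prop :=
  (TensorProduct.rid k C).toLinearMap ∘ₗ map LinearMap.id (ε k C) ∘ₗ ψC =
    (TensorProduct.lid k C).toLinearMap ∘ₗ map (ε k C) LinearMap.id

/-- `ψ^C(e ⊗ c) = Δc` -/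
def AxPsiCUnit : Prop := ∀ c : C, ψC (e ⊗ₜ[k] c) = Δ k C c

/-- `(P, C, ψ, e, ψ^C)` form entwining data -/
def IsEntwiningData : Prop :=
  IsEntwining k P C ψ ∧ IsGrouplike k C e ∧
    AxPsiCComul k C ψC ∧ AxPsiCCounit k C ψC ∧ AxPsiCUnit k C e ψC

/-- the right coaction `Δ_R u = ψ(e ⊗ u)` on `P` -/
def deltaR : P →ₗ[k] P ⊗[k] C := ψ ∘ₗ TensorProduct.mk k C P e

/-- the fixed point subspace `M = P^{coC}_e`, as a submodule of `P` -/
def Msub : Submodule k P where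
  carrier := {x : P | ψ (e ⊗ₜ x) = x ⊗ₜ e}
  add_mem' := by
    intro a b ha hb
    simp only [Set.mem_setOf_eq] at *
    rw [TensorProduct.tmul_add, map_add, ha, hb, TensorProduct.add_tmul]
  zero_mem' := by
    simp only [Set.mem_setOf_eq, TensorProduct.tmul_zero, map_zero,
      TensorProduct.zero_tmul]
  smul_mem' := by
    intro r x hx
    simp only [Set.mem_setOf_eq] at *
    rw [TensorProduct.tmul_smul, map_smul, hx, TensorProduct.smul_tmul']

/-- the subspace `M ⊗ C` of `P ⊗ C` -/
def MCsub : Submodule k (P ⊗[k] C) :=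
  LinearMap.range (map (Msub k P C ψ e).subtype (LinearMap.id : C →ₗ[k] C))

variable (ρ : C ⊗[k] P →ₗ[k] P) (σ : C ⊗[k] C →ₗ[k] P)

/-- the map `ρ̂ : c ⊗ x ↦ ρ(c₍₁₎ ⊗ x_α) ⊗ c₍₂₎^α` -/
def rhat : C ⊗[k] P →ₗ[k] P ⊗[k] C :=
  map ρ LinearMap.id
    ∘ₗ (TensorProduct.assoc k C P C).symm.toLinearMap
    ∘ₗ map LinearMap.id ψ
    ∘ₗ (TensorProduct.assoc k C C P).toLinearMap
    ∘ₗ map (Δ k C) LinearMap.id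

/-- the map `σ̂ : b ⊗ c ↦ σ(b₍₁₎ ⊗ c_A) ⊗ b₍₂₎^A` -/
def shat : C ⊗[k] C →ₗ[k] P ⊗[k] C :=
  map σ LinearMap.id
    ∘ₗ (TensorProduct.assoc k C C C).symm.toLinearMap
    ∘ₗ map LinearMap.id ψC
    ∘ₗ (TensorProduct.assoc k C C C).toLinearMap
    ∘ₗ map (Δ k C) LinearMap.id

/-- multiplication of the first two factors: `x ⊗ (y ⊗ c) ↦ xy ⊗ c` -/
def mulPC : P ⊗[k] (P ⊗[k] C) →ₗ[k] P ⊗[k] C :=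
  map (μ k P) LinearMap.id ∘ₗ (TensorProduct.assoc k P P C).symm.toLinearMap

/-- the crossed product `(x ⊗ b)(y ⊗ c) = xρ(b₍₁₎⊗y_α)σ(b₍₂₎^α₍₁₎⊗c_A) ⊗ b₍₂₎^α₍₂₎^A` -/
def prodX : (P ⊗[k] C) ⊗[k] (P ⊗[k] C) →ₗ[k] P ⊗[k] C :=
  mulPC k P C
    ∘ₗ map LinearMap.id (mulPC k P C)
    ∘ₗ map LinearMap.id
        (map LinearMap.id (shat k P C ψC σ)
          ∘ₗ (TensorProduct.assoc k P C C).toLinearMap)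
    ∘ₗ map LinearMap.id
        (map (rhat k P C ψ ρ) LinearMap.id
          ∘ₗ (TensorProduct.assoc k C P C).symm.toLinearMap)
    ∘ₗ (TensorProduct.assoc k P C (P ⊗[k] C)).toLinearMap

/-- condition (i): `ρ(e,x) = x` for `x ∈ M` and `ρ(c,1) = ε(c)1` -/
def CondI : Prop :=
  (∀ x : P, x ∈ Msub k P C ψ e → ρ (e ⊗ₜ x) = x) ∧
    ∀ c : C, ρ (c ⊗ₜ (1 : P)) = ε k C c • (1 : P)

/-- condition (ii): `ρ̂` maps `C ⊗ M` into `M ⊗ C` -/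
def CondII : Prop :=
  ∀ (c : C) (x : P), x ∈ Msub k P C ψ e →
    rhat k P C ψ ρ (c ⊗ₜ x) ∈ MCsub k P C ψ e

/-- the right hand side of condition (iii): `(μ⊗id)∘(id⊗ρ̂)∘(ρ̂⊗id)` -/
def BmapIII : C ⊗[k] (P ⊗[k] P) →ₗ[k] P ⊗[k] C :=
  mulPC k P C
    ∘ₗ map LinearMap.id (rhat k P C ψ ρ)
    ∘ₗ (TensorProduct.assoc k P C P).toLinearMap
    ∘ₗ map (rhat k P C ψ ρ) LinearMap.id
    ∘ₗ (TensorProduct.assoc k C P P).symm.toLinearMap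

/-- condition (iii): twisted multiplicativity of `ρ` -/
def CondIII : Prop :=
  ∀ (c : C) (x y : P), x ∈ Msub k P C ψ e → y ∈ Msub k P C ψ e →
    rhat k P C ψ ρ (c ⊗ₜ (x * y)) = BmapIII k P C ψ ρ (c ⊗ₜ (x ⊗ₜ y))

/-- `σ` takes values in `M` -/
def SigmaIntoM : Prop := ∀ b c : C, σ (b ⊗ₜ c) ∈ Msub k P C ψ e

/-- condition (iv): `σ(e⊗c) = ε(c)1` and `σ(c₍₁₎⊗e_A) ⊗ c₍₂₎^A = 1 ⊗ c` -/
def CondIV : Prop :=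
  (∀ c : C, σ (e ⊗ₜ c) = ε k C c • (1 : P)) ∧
    ∀ c : C, shat k P C ψC σ (c ⊗ₜ e) = (1 : P) ⊗ₜ c

/-- `(ρ, σ)` are crossed product data: conditions (i)–(iv). -/
def IsCrossedData : Prop :=
  CondI k P C ψ e ρ ∧ CondII k P C ψ e ρ ∧ CondIII k P C ψ e ρ ∧
    SigmaIntoM k P C ψ e σ ∧ CondIV k P C e ψC σ

/-- left hand side of the cocycle condition (2.6) -/
def CocLHS : C ⊗[k] (C ⊗[k] C) →ₗ[k] P ⊗[k] C :=
  mulPC k P C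
    ∘ₗ map LinearMap.id (shat k P C ψC σ)
    ∘ₗ (TensorProduct.assoc k P C C).toLinearMap
    ∘ₗ map (rhat k P C ψ ρ) LinearMap.id
    ∘ₗ (TensorProduct.assoc k C P C).symm.toLinearMap
    ∘ₗ map LinearMap.id (shat k P C ψC σ)

/-- right hand side of the cocycle condition (2.6) -/
def CocRHS : C ⊗[k] (C ⊗[k] C) →ₗ[k] P ⊗[k] C :=
  mulPC k P C
    ∘ₗ map LinearMap.id (shat k P C ψC σ)
    ∘ₗ (TensorProduct.assoc k P C C).toLinearMap
    ∘ₗ map (shat k P C ψC σ) LinearMap.id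
    ∘ₗ (TensorProduct.assoc k C C C).symm.toLinearMap

/-- the cocycle condition (2.6) -/
def Cocycle : Prop := CocLHS k P C ψ ψC ρ σ = CocRHS k P C ψC σ

/-- left hand side of the twisted module condition (2.7) -/
def TwLHS : C ⊗[k] (C ⊗[k] P) →ₗ[k] P ⊗[k] C :=
  mulPC k P C
    ∘ₗ map LinearMap.id (shat k P C ψC σ)
    ∘ₗ (TensorProduct.assoc k P C C).toLinearMap
    ∘ₗ map (rhat k P C ψ ρ) LinearMap.id
    ∘ₗ (TensorProduct.assoc k C P C).symm.toLinearMap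
    ∘ₗ map LinearMap.id (rhat k P C ψ ρ)

/-- right hand side of the twisted module condition (2.7) -/
def TwRHS : C ⊗[k] (C ⊗[k] P) →ₗ[k] P ⊗[k] C :=
  mulPC k P C
    ∘ₗ map LinearMap.id (rhat k P C ψ ρ)
    ∘ₗ (TensorProduct.assoc k P C P).toLinearMap
    ∘ₗ map (shat k P C ψC σ) LinearMap.id
    ∘ₗ (TensorProduct.assoc k C C P).symm.toLinearMap

/-- the twisted module condition (2.7), for `x ∈ M` -/
def Twisted : Prop :=
  ∀ (a b : C) (x : P), x ∈ Msub k P C ψ e →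
    TwLHS k P C ψ ψC ρ σ (a ⊗ₜ (b ⊗ₜ x)) = TwRHS k P C ψ ψC ρ σ (a ⊗ₜ (b ⊗ₜ x))

end Entwine

namespace Entwine

section Cleft
variable (k : Type) [Field k] (P : Type) [Ring P] [Algebra k P]
    (C : Type) [AddCommGroup C] [Module k C] [Coalgebra k C]
    (ψ : C ⊗[k] P →ₗ[k] P ⊗[k] C) (e : C) (ψC : C ⊗[k] C →ₗ[k] C ⊗[k] C)
    (Φ Φi : C →ₗ[k] P)

/-- `Φi` is a convolution inverse of `Φ` in `Hom(C, P)` -/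
def ConvInv : Prop :=
  (μ k P ∘ₗ map Φ Φi ∘ₗ Δ k C = Algebra.linearMap k P ∘ₗ ε k C) ∧
    (μ k P ∘ₗ map Φi Φ ∘ₗ Δ k C = Algebra.linearMap k P ∘ₗ ε k C)

/-- the covariance condition `ψ∘(id⊗Φ) = (Φ⊗id)∘ψ^C` -/
def CovPhi : Prop :=
  ψ ∘ₗ map LinearMap.id Φ = map Φ LinearMap.id ∘ₗ ψC

/-- `ρ(c ⊗ u) = Φ(c₍₁₎) u_α Φ⁻¹(c₍₂₎^α)` -/
def rhoPhi : C ⊗[k] P →ₗ[k] P :=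
  μ k P
    ∘ₗ map LinearMap.id (μ k P)
    ∘ₗ map Φ (map LinearMap.id Φi)
    ∘ₗ map LinearMap.id ψ
    ∘ₗ (TensorProduct.assoc k C C P).toLinearMap
    ∘ₗ map (Δ k C) LinearMap.id

/-- `σ(b ⊗ c) = Φ(b₍₁₎) Φ(c_A) Φ⁻¹(b₍₂₎^A)` -/
def sigmaPhi : C ⊗[k] C →ₗ[k] P :=
  μ k P
    ∘ₗ map LinearMap.id (μ k P)
    ∘ₗ map Φ (map Φ Φi)
    ∘ₗ map LinearMap.id ψC
    ∘ₗ (TensorProduct.assoc k C C C).toLinearMap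
    ∘ₗ map (Δ k C) LinearMap.id

/-- `Θ : x ⊗ c ↦ x Φ(c)` -/
def Theta : P ⊗[k] C →ₗ[k] P := μ k P ∘ₗ map LinearMap.id Φ

/-- `Θ⁻¹ : u ↦ u_α Φ⁻¹(e^α₍₁₎) ⊗ e^α₍₂₎` -/
def ThetaInv : P →ₗ[k] P ⊗[k] C :=
  mulPC k P C
    ∘ₗ map LinearMap.id (map Φi LinearMap.id)
    ∘ₗ map LinearMap.id (Δ k C)
    ∘ₗ deltaR k P C ψ e

end Cleft

end Entwine

namespace Entwine

section Stmt12
variable (k : Type) [Field k] (P : Type) [Ring P] [Algebra k P]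
    (C : Type) [AddCommGroup C] [Module k C] [Coalgebra k C]
    (ψ : C ⊗[k] P →ₗ[k] P ⊗[k] C) (e : C) (ψC : C ⊗[k] C →ₗ[k] C ⊗[k] C)
    (Φ Φi : C →ₗ[k] P)

/-- the map `b ⊗ (y ⊗ c) ↦ (y_α ⊗ c_A) ⊗ b^{αA}` -/
def moveThrough12 : C ⊗[k] (P ⊗[k] C) →ₗ[k] (P ⊗[k] C) ⊗[k] C :=
  (TensorProduct.assoc k P C C).symm.toLinearMap
    ∘ₗ map LinearMap.id ψC
    ∘ₗ (TensorProduct.assoc k P C C).toLinearMap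
    ∘ₗ map ψ LinearMap.id
    ∘ₗ (TensorProduct.assoc k C P C).symm.toLinearMap

/-- the explicit cleft product
`(x ⊗ b)(y ⊗ c) = xΦ(b₍₁₎) y_α Φ(c_A) Φ⁻¹(b₍₂₎^{αA}₍₁₎) ⊗ b₍₂₎^{αA}₍₂₎` -/
def cleftProd : (P ⊗[k] C) ⊗[k] (P ⊗[k] C) →ₗ[k] P ⊗[k] C :=
  mulPC k P C
    ∘ₗ map LinearMap.id (mulPC k P C)
    ∘ₗ map (Theta k P C Φ) LinearMap.id
    ∘ₗ map LinearMap.id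
        (map (Theta k P C Φ) (map Φi LinearMap.id ∘ₗ Δ k C))
    ∘ₗ map LinearMap.id (moveThrough12 k P C ψ ψC)
    ∘ₗ (TensorProduct.assoc k (P ⊗[k] C) C (P ⊗[k] C)).toLinearMap
    ∘ₗ map (TensorProduct.assoc k P C C).symm.toLinearMap LinearMap.id
    ∘ₗ map (map LinearMap.id (Δ k C)) LinearMap.id

/-
`Hom(C, P)` is an algebra under convolution, and `f ↦ convAction f` is an anti-homomorphism from it
to the `P`-linear endomorphisms of `P ⊗ C`; so the actions of `Φ` and `Φ⁻¹` are mutually inverse.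
Covariance makes `Φ` colinear, hence `Δ_R ∘ Θ` is the action of `Φ` on `M ⊗ C`, while `Θ⁻¹` is the
action of `Φ⁻¹` after `Δ_R`. With `E u = u₍₀₎ Φ⁻¹(u₍₁₎)`, a projection of `P` onto `M`, one finds
`ρ(c ⊗ u) = E(Φ(c) u)`, `ρ̂(c ⊗ u) = Θ⁻¹(Φ(c) u)` and `σ(b ⊗ c) = ρ(b ⊗ Φ(c))`, so the crossed
product is the multiplication of `P` transported along `Θ`.
-/

section LeftLinearExtension

variable {R A D N : Type*} [CommSemiring R] [Semiring A] [Algebra R A]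
  [AddCommMonoid D] [Module R D]
  [AddCommMonoid N] [Module R N] [Module A N] [IsScalarTower R A N]

/-- The `A`-linear extension `a ⊗ d ↦ a • f d` of an `R`-linear map `f`. This is
`LinearMap.liftBaseChange` for an algebra `A` that need not be commutative. -/
def leftExtend (f : D →ₗ[R] N) : A ⊗[R] D →ₗ[A] N :=
  AlgebraTensorModule.lift (toSpanSingleton A (D →ₗ[R] N) f)

@[simp]
lemma leftExtend_tmul (f : D →ₗ[R] N) (a : A) (d : D) : leftExtend f (a ⊗ₜ d) = a • f d := rfl

end LeftLinearExtension

section ConvolutionAction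

variable {R A D : Type*} [CommSemiring R] [Semiring A] [Algebra R A]
  [AddCommMonoid D] [Module R D] [Coalgebra R D]

/-- The left `A`-linear endomorphism `a ⊗ d ↦ a f(d₍₁₎) ⊗ d₍₂₎` of `A ⊗ D`, by which the
convolution algebra `Hom(D, A)` acts on `A ⊗ D` from the right. -/
def convAction (f : WithConv (D →ₗ[R] A)) : A ⊗[R] D →ₗ[A] A ⊗[R] D :=
  leftExtend (map f.ofConv LinearMap.id ∘ₗ Coalgebra.comul)

@[simp]
lemma convAction_tmul (f : WithConv (D →ₗ[R] A)) (a : A) (d : D) :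
    convAction f (a ⊗ₜ d) = a • map f.ofConv LinearMap.id (Coalgebra.comul d) := rfl

lemma leftExtend_comp_convAction (f g : WithConv (D →ₗ[R] A)) :
    leftExtend g.ofConv ∘ₗ convAction f = leftExtend (f * g).ofConv := by
  have h : (leftExtend g.ofConv).restrictScalars R ∘ₗ map f.ofConv LinearMap.id =
      mul' R A ∘ₗ map f.ofConv g.ofConv := by
    ext; simp
  ext d
  simpa using LinearMap.congr_fun h (Coalgebra.comul d)

lemma convAction_apply (f : WithConv (D →ₗ[R] A)) (w : A ⊗[R] D) :
    convAction f w = map ((leftExtend f.ofConv).restrictScalars R) LinearMap.id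
      ((TensorProduct.assoc R A D D).symm (map LinearMap.id Coalgebra.comul w)) := by
  have h : (leftExtend (A := A) (map f.ofConv (LinearMap.id : D →ₗ[R] D))).restrictScalars R =
      map ((leftExtend f.ofConv).restrictScalars R) LinearMap.id ∘ₗ
        (TensorProduct.assoc R A D D).symm.toLinearMap := by
    ext; simp [smul_tmul']
  induction w using TensorProduct.induction_on with
  | zero => simp
  | tmul a d => simpa using LinearMap.congr_fun h (a ⊗ₜ Coalgebra.comul d)
  | add v w hv hw => simp only [map_add, hv, hw]

lemma convAction_comp_convAction (f g : WithConv (D →ₗ[R] A)) :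
    convAction g ∘ₗ convAction f = convAction (f * g) := by
  ext d
  have h : map ((leftExtend g.ofConv).restrictScalars R) LinearMap.id ∘ₗ
        (TensorProduct.assoc R A D D).symm.toLinearMap ∘ₗ map f.ofConv LinearMap.id =
      map (mul' R A ∘ₗ map f.ofConv g.ofConv) LinearMap.id ∘ₗ
        (TensorProduct.assoc R D D D).symm.toLinearMap := by
    ext; simp
  have hΔ := LinearMap.congr_fun h (Coalgebra.comul.lTensor D (Coalgebra.comul d))
  have hfg : convAction g (map f.ofConv LinearMap.id (Coalgebra.comul d)) =
      map (f * g).ofConv LinearMap.id (Coalgebra.comul d) := by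
    simp only [comp_apply, LinearEquiv.coe_coe, Coalgebra.coassoc_symm_apply] at hΔ
    simpa [convAction_apply, lTensor, rTensor, map_map, LinearMap.convMul_def, comp_assoc] using hΔ
  simpa using hfg

lemma convAction_one : convAction (1 : WithConv (D →ₗ[R] A)) = LinearMap.id := by
  ext d
  have hd := congrArg (map (Algebra.linearMap R A) LinearMap.id)
    (Coalgebra.rTensor_counit_comul (R := R) d)
  simpa [LinearMap.convOne_def, rTensor, map_map] using hd

end ConvolutionAction

section CoalgebraFree

omit [Coalgebra k C]

variable {k P C ψ e ψC Φ}

lemma mulPC_tmul (u : P) (w : P ⊗[k] C) : mulPC k P C (u ⊗ₜ w) = u • w := by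
  induction w using TensorProduct.induction_on with
  | zero => simp
  | tmul v c => simp [mulPC, smul_tmul']
  | add v w hv hw => rw [tmul_add, map_add, hv, hw, smul_add]

/-- The action `(u ⊗ c) · v = u v_α ⊗ c^α` of `P` on `P ⊗ C` from the right. -/
def rightMul (ψ : C ⊗[k] P →ₗ[k] P ⊗[k] C) (v : P) : P ⊗[k] C →ₗ[P] P ⊗[k] C :=
  leftExtend (ψ ∘ₗ (TensorProduct.mk k C P).flip v)

@[simp]
lemma rightMul_tmul (u v : P) (c : C) : rightMul ψ v (u ⊗ₜ c) = u • ψ (c ⊗ₜ v) := rfl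

lemma AxMul.psi_mul (h : AxMul k P C ψ) (c : C) (u v : P) :
    ψ (c ⊗ₜ (u * v)) = rightMul ψ v (ψ (c ⊗ₜ u)) := by
  have hψ (w : P ⊗[k] C) :
      mulPC k P C (map LinearMap.id ψ (TensorProduct.assoc k P C P (w ⊗ₜ v))) =
        rightMul ψ v w := by
    induction w using TensorProduct.induction_on with
    | zero => simp
    | tmul u c => simp [mulPC_tmul]
    | add w₁ w₂ h₁ h₂ => simp only [add_tmul, map_add, h₁, h₂]
  simpa [mulPC, ← hψ] using LinearMap.congr_fun h (c ⊗ₜ (u ⊗ₜ v))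

lemma AxMul.deltaR_mul (h : AxMul k P C ψ) (u v : P) :
    deltaR k P C ψ e (u * v) = rightMul ψ v (deltaR k P C ψ e u) :=
  h.psi_mul e u v

lemma AxMul.deltaR_mul_of_mem (h : AxMul k P C ψ) {x : P} (hx : x ∈ Msub k P C ψ e) (u : P) :
    deltaR k P C ψ e (x * u) = x • deltaR k P C ψ e u := by
  rw [h.deltaR_mul, show deltaR k P C ψ e x = x ⊗ₜ e from hx, rightMul_tmul]
  rfl

lemma AxOne.deltaR_one (h : AxOne k P C ψ) : deltaR k P C ψ e 1 = 1 ⊗ₜ e := h e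

lemma theta_eq_leftExtend (w : P ⊗[k] C) : Theta k P C Φ w = leftExtend Φ w := by
  induction w using TensorProduct.induction_on with
  | zero => simp
  | tmul u c => simp [Theta]
  | add v w hv hw => simp only [map_add, hv, hw]

@[simp]
lemma theta_tmul (u : P) (c : C) : Theta k P C Φ (u ⊗ₜ c) = u * Φ c := by simp [Theta]

lemma theta_smul (v : P) (w : P ⊗[k] C) : Theta k P C Φ (v • w) = v * Theta k P C Φ w := by
  rw [theta_eq_leftExtend, theta_eq_leftExtend, map_smul, smul_eq_mul]

lemma CovPhi.psi_tmul (h : CovPhi k P C ψ ψC Φ) (b c : C) :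
    ψ (b ⊗ₜ Φ c) = map Φ LinearMap.id (ψC (b ⊗ₜ c)) :=
  LinearMap.congr_fun h (b ⊗ₜ c)

lemma map_theta_moveThrough12 (hμ : AxMul k P C ψ) (hcov : CovPhi k P C ψ ψC Φ) (b : C)
    (v : P ⊗[k] C) :
    map (Theta k P C Φ) LinearMap.id (moveThrough12 k P C ψ ψC (b ⊗ₜ v)) =
      ψ (b ⊗ₜ Theta k P C Φ v) := by
  have hψC (c : C) (w : P ⊗[k] C) :
      map (Theta k P C Φ) LinearMap.id ((TensorProduct.assoc k P C C).symm
        (map LinearMap.id ψC (TensorProduct.assoc k P C C (w ⊗ₜ c)))) = rightMul ψ (Φ c) w := by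
    have hy (y : P) (t : C ⊗[k] C) : map (Theta k P C Φ) LinearMap.id
        ((TensorProduct.assoc k P C C).symm (y ⊗ₜ t)) = y • map Φ LinearMap.id t := by
      induction t using TensorProduct.induction_on with
      | zero => simp
      | tmul b c => simp [smul_tmul']
      | add s t hs ht => simp only [tmul_add, map_add, smul_add, hs, ht]
    induction w using TensorProduct.induction_on with
    | zero => simp
    | tmul y b => simp [hy, hcov.psi_tmul]
    | add v w hv hw => simp only [add_tmul, map_add, hv, hw]
  induction v using TensorProduct.induction_on with
  | zero => simp
  | tmul y c => simp [moveThrough12, hψC, hμ.psi_mul]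
  | add v w hv hw => simp only [tmul_add, map_add, hv, hw]

end CoalgebraFree

section Coaction

variable {k P C ψ e}

lemma AxComul.deltaR_coassoc (h : AxComul k P C ψ) (he : Δ k C e = e ⊗ₜ[k] e) (u : P) :
    map LinearMap.id (Δ k C) (deltaR k P C ψ e u) =
      TensorProduct.assoc k P C C
        (map (deltaR k P C ψ e) LinearMap.id (deltaR k P C ψ e u)) := by
  have hψ (w : P ⊗[k] C) :
      map ψ LinearMap.id ((TensorProduct.assoc k C P C).symm (e ⊗ₜ w)) =
        map (deltaR k P C ψ e) LinearMap.id w := by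
    induction w using TensorProduct.induction_on with
    | zero => simp
    | tmul u c => simp [deltaR]
    | add w₁ w₂ h₁ h₂ => simp only [tmul_add, map_add, h₁, h₂]
  simpa [deltaR, he, hψ] using LinearMap.congr_fun h (e ⊗ₜ u)

lemma AxCounit.leftExtend_one_deltaR (h : AxCounit k P C ψ) (he : ε k C e = 1) (u : P) :
    leftExtend (1 : WithConv (C →ₗ[k] P)).ofConv (deltaR k P C ψ e u) = u := by
  have hε : (leftExtend (1 : WithConv (C →ₗ[k] P)).ofConv).restrictScalars k =
      (TensorProduct.rid k P).toLinearMap ∘ₗ map LinearMap.id (ε k C) := by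
    ext; simp [LinearMap.convOne_def, Algebra.algebraMap_eq_smul_one]
  have hu := LinearMap.congr_fun h (e ⊗ₜ u)
  rw [← comp_assoc, ← hε] at hu
  simpa [he, deltaR] using hu

end Coaction

section Cleft

open WithConv

variable {k P C ψ e ψC Φ Φi}

lemma ConvInv.mul_eq_one (h : ConvInv k P C Φ Φi) : toConv Φ * toConv Φi = 1 :=
  congrArg toConv h.1

lemma ConvInv.inv_mul_eq_one (h : ConvInv k P C Φ Φi) : toConv Φi * toConv Φ = 1 :=
  congrArg toConv h.2

lemma thetaInv_eq_convAction (u : P) :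
    ThetaInv k P C ψ e Φi u = convAction (toConv Φi) (deltaR k P C ψ e u) := by
  have h (w : P ⊗[k] C) : mulPC k P C (map LinearMap.id (map Φi LinearMap.id)
      (map LinearMap.id (Δ k C) w)) = convAction (toConv Φi) w := by
    induction w using TensorProduct.induction_on with
    | zero => simp
    | tmul u c => simp [mulPC_tmul]
    | add v w hv hw => simp only [map_add, hv, hw]
  exact h _

lemma theta_thetaInv (hε : AxCounit k P C ψ) (he : ε k C e = 1) (hΦ : ConvInv k P C Φ Φi)
    (u : P) : Theta k P C Φ (ThetaInv k P C ψ e Φi u) = u := by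
  rw [theta_eq_leftExtend, thetaInv_eq_convAction]
  have h := LinearMap.congr_fun (leftExtend_comp_convAction (toConv Φi) (toConv Φ))
    (deltaR k P C ψ e u)
  rw [hΦ.inv_mul_eq_one, hε.leftExtend_one_deltaR he] at h
  exact h

lemma ConvInv.convAction_inv_convAction (hΦ : ConvInv k P C Φ Φi) (w : P ⊗[k] C) :
    convAction (toConv Φi) (convAction (toConv Φ) w) = w := by
  rw [← comp_apply, convAction_comp_convAction, hΦ.mul_eq_one, convAction_one, id_apply]

lemma ConvInv.convAction_surjective (hΦ : ConvInv k P C Φ Φi) :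
    Function.Surjective (convAction (toConv Φ)) := fun w =>
  ⟨convAction (toConv Φi) w, by
    rw [← comp_apply, convAction_comp_convAction, hΦ.inv_mul_eq_one, convAction_one, id_apply]⟩

variable (k P C ψ e Φ) in
/-- `Φ` is a morphism of right `C`-comodules: `Δ_R (Φ c) = Φ(c₍₁₎) ⊗ c₍₂₎`. -/
def IsComoduleMap : Prop := deltaR k P C ψ e ∘ₗ Φ = map Φ LinearMap.id ∘ₗ Δ k C

lemma CovPhi.isComoduleMap (h : CovPhi k P C ψ ψC Φ) (hψC : AxPsiCUnit k C e ψC) :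
    IsComoduleMap k P C ψ e Φ := by
  ext c
  simpa [deltaR, hψC c] using h.psi_tmul e c

lemma IsComoduleMap.deltaR_apply (h : IsComoduleMap k P C ψ e Φ) (c : C) :
    deltaR k P C ψ e (Φ c) = convAction (toConv Φ) (1 ⊗ₜ c) := by
  simpa using LinearMap.congr_fun h c

lemma deltaR_theta (hμ : AxMul k P C ψ) (hΔ : IsComoduleMap k P C ψ e Φ) {w : P ⊗[k] C}
    (hw : w ∈ MCsub k P C ψ e) :
    deltaR k P C ψ e (Theta k P C Φ w) = convAction (toConv Φ) w := by
  obtain ⟨t, rfl⟩ := hw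
  induction t using TensorProduct.induction_on with
  | zero => simp
  | tmul x c =>
    rw [map_tmul, Submodule.subtype_apply, id_apply, theta_tmul, hμ.deltaR_mul_of_mem x.2,
      hΔ.deltaR_apply, ← map_smul, smul_tmul', smul_eq_mul, mul_one]
  | add s t hs ht => simp only [map_add, hs, ht]

lemma thetaInv_theta (hμ : AxMul k P C ψ) (hΔ : IsComoduleMap k P C ψ e Φ)
    (hΦ : ConvInv k P C Φ Φi) {w : P ⊗[k] C} (hw : w ∈ MCsub k P C ψ e) :
    ThetaInv k P C ψ e Φi (Theta k P C Φ w) = w := by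
  rw [thetaInv_eq_convAction, deltaR_theta hμ hΔ hw, hΦ.convAction_inv_convAction]

end Cleft

section Projection

open WithConv

variable {k P C ψ e Φ Φi}

section CoalgebraFree

omit [Coalgebra k C]

variable (k P C ψ e Φi) in
/-- The map `E u = u₍₀₎ Φ⁻¹(u₍₁₎)`, a left `M`-linear projection of `P` onto `M`. -/
def cleftProj : P →ₗ[k] P := Theta k P C Φi ∘ₗ deltaR k P C ψ e

lemma cleftProj_apply (u : P) :
    cleftProj k P C ψ e Φi u = leftExtend Φi (deltaR k P C ψ e u) :=
  theta_eq_leftExtend _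

lemma cleftProj_mul (hμ : AxMul k P C ψ) {x : P} (hx : x ∈ Msub k P C ψ e) (u : P) :
    cleftProj k P C ψ e Φi (x * u) = x * cleftProj k P C ψ e Φi u := by
  rw [cleftProj_apply, hμ.deltaR_mul_of_mem hx, map_smul, cleftProj_apply, smul_eq_mul]

lemma map_mem_MCsub {f : P →ₗ[k] P} (hf : ∀ u, f u ∈ Msub k P C ψ e) (w : P ⊗[k] C) :
    map f LinearMap.id w ∈ MCsub k P C ψ e :=
  ⟨map (f.codRestrict _ hf) LinearMap.id w, by rw [map_map, subtype_comp_codRestrict, id_comp]⟩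

end CoalgebraFree

lemma cleftProj_Φ (hΔ : IsComoduleMap k P C ψ e Φ) (hΦ : ConvInv k P C Φ Φi) (c : C) :
    cleftProj k P C ψ e Φi (Φ c) = ε k C c • (1 : P) := by
  have h := LinearMap.congr_fun (leftExtend_comp_convAction (toConv Φ) (toConv Φi)) (1 ⊗ₜ c)
  rw [hΦ.mul_eq_one] at h
  rw [cleftProj_apply, hΔ.deltaR_apply]
  simpa [LinearMap.convOne_def, Algebra.algebraMap_eq_smul_one] using h

lemma cleftProj_one (hΔ : IsComoduleMap k P C ψ e Φ) (hΦ : ConvInv k P C Φ Φi)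
    (hε : ε k C e = 1) (hΦe : Φ e = 1) : cleftProj k P C ψ e Φi 1 = 1 := by
  rw [← hΦe, cleftProj_Φ hΔ hΦ, hε, one_smul, hΦe]

lemma thetaInv_eq_map_cleftProj (hcomul : AxComul k P C ψ) (he : Δ k C e = e ⊗ₜ[k] e) (u : P) :
    ThetaInv k P C ψ e Φi u =
      map (cleftProj k P C ψ e Φi) LinearMap.id (deltaR k P C ψ e u) := by
  have hE : cleftProj k P C ψ e Φi =
      (leftExtend Φi).restrictScalars k ∘ₗ deltaR k P C ψ e := LinearMap.ext cleftProj_apply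
  rw [thetaInv_eq_convAction, convAction_apply, hcomul.deltaR_coassoc he,
    LinearEquiv.symm_apply_apply, hE, map_map, id_comp]

lemma deltaR_cleftProj (hμ : AxMul k P C ψ) (hcomul : AxComul k P C ψ)
    (he : Δ k C e = e ⊗ₜ[k] e) (u : P) :
    deltaR k P C ψ e (cleftProj k P C ψ e Φi u) =
      leftExtend (ψ ∘ₗ map LinearMap.id Φi ∘ₗ Δ k C) (deltaR k P C ψ e u) := by
  have hΦi (w : P ⊗[k] C) : deltaR k P C ψ e (leftExtend Φi w) =
      leftExtend (ψ ∘ₗ map LinearMap.id Φi) (TensorProduct.assoc k P C C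
        (map (deltaR k P C ψ e) LinearMap.id w)) := by
    have hassoc (t : P ⊗[k] C) (c : C) :
        leftExtend (ψ ∘ₗ map LinearMap.id Φi) (TensorProduct.assoc k P C C (t ⊗ₜ c)) =
          rightMul ψ (Φi c) t := by
      induction t using TensorProduct.induction_on with
      | zero => simp
      | tmul v d => simp
      | add s t hs ht => simp only [add_tmul, map_add, hs, ht]
    induction w using TensorProduct.induction_on with
    | zero => simp
    | tmul v c => simp [hassoc, hμ.deltaR_mul]
    | add v w hv hw => simp only [map_add, hv, hw]
  have hcomp (w : P ⊗[k] C) :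
      leftExtend (ψ ∘ₗ map LinearMap.id Φi) (map LinearMap.id (Δ k C) w) =
        leftExtend (ψ ∘ₗ map LinearMap.id Φi ∘ₗ Δ k C) w := by
    induction w using TensorProduct.induction_on with
    | zero => simp
    | tmul v c => simp
    | add v w hv hw => simp only [map_add, hv, hw]
  rw [cleftProj_apply, hΦi, ← hcomul.deltaR_coassoc he, hcomp]

/- At `Δ_R (Φ c) = convAction Φ (1 ⊗ c)` this says `Δ_R (E (Φ c)) = E (Φ c) ⊗ e`, which holds since
`E (Φ c) = ε(c) 1`; these elements generate `P ⊗ C` over `P` because `convAction Φ` is onto. -/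
lemma leftExtend_psi_convInv (hone : AxOne k P C ψ) (hμ : AxMul k P C ψ) (hcomul : AxComul k P C ψ)
    (he : Δ k C e = e ⊗ₜ[k] e) (hΔ : IsComoduleMap k P C ψ e Φ) (hΦ : ConvInv k P C Φ Φi)
    (w : P ⊗[k] C) :
    leftExtend (ψ ∘ₗ map LinearMap.id Φi ∘ₗ Δ k C) w = leftExtend Φi w ⊗ₜ e := by
  obtain ⟨w, rfl⟩ := hΦ.convAction_surjective w
  induction w using TensorProduct.induction_on with
  | zero => simp
  | tmul u c =>
    have hc := deltaR_cleftProj (Φi := Φi) hμ hcomul he (Φ c)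
    have hE := cleftProj_Φ hΔ hΦ c
    rw [hE, map_smul, hone.deltaR_one, hΔ.deltaR_apply] at hc
    rw [cleftProj_apply, hΔ.deltaR_apply] at hE
    rw [← mul_one u, ← smul_eq_mul, ← smul_tmul', map_smul, map_smul, map_smul, ← hc, hE,
      smul_eq_mul, smul_tmul', smul_tmul', smul_eq_mul]
  | add v w hv hw => simp only [map_add, add_tmul, hv, hw]

lemma cleftProj_mem (hone : AxOne k P C ψ) (hμ : AxMul k P C ψ) (hcomul : AxComul k P C ψ)
    (he : Δ k C e = e ⊗ₜ[k] e) (hΔ : IsComoduleMap k P C ψ e Φ) (hΦ : ConvInv k P C Φ Φi)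
    (u : P) : cleftProj k P C ψ e Φi u ∈ Msub k P C ψ e := by
  change deltaR k P C ψ e _ = _
  rw [deltaR_cleftProj hμ hcomul he, leftExtend_psi_convInv hone hμ hcomul he hΔ hΦ,
    cleftProj_apply]

lemma thetaInv_mem (hone : AxOne k P C ψ) (hμ : AxMul k P C ψ) (hcomul : AxComul k P C ψ)
    (he : Δ k C e = e ⊗ₜ[k] e) (hΔ : IsComoduleMap k P C ψ e Φ) (hΦ : ConvInv k P C Φ Φi)
    (u : P) : ThetaInv k P C ψ e Φi u ∈ MCsub k P C ψ e := by
  rw [thetaInv_eq_map_cleftProj hcomul he]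
  exact map_mem_MCsub (cleftProj_mem hone hμ hcomul he hΔ hΦ) _

lemma thetaInv_mul (hμ : AxMul k P C ψ) {x : P} (hx : x ∈ Msub k P C ψ e) (u : P) :
    ThetaInv k P C ψ e Φi (x * u) = x • ThetaInv k P C ψ e Φi u := by
  simp only [thetaInv_eq_convAction, hμ.deltaR_mul_of_mem hx, map_smul]

end Projection

section CrossedProduct

open WithConv

variable {k P C ψ e ψC Φ Φi}

lemma deltaR_Φ_mul (hμ : AxMul k P C ψ) (hΔ : IsComoduleMap k P C ψ e Φ) (c : C) (u : P) :
    deltaR k P C ψ e (Φ c * u) =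
      mulPC k P C (map Φ ψ (TensorProduct.assoc k C C P (Δ k C c ⊗ₜ u))) := by
  have hΦ (t : C ⊗[k] C) : rightMul ψ u (map Φ LinearMap.id t) =
      mulPC k P C (map Φ ψ (TensorProduct.assoc k C C P (t ⊗ₜ u))) := by
    induction t using TensorProduct.induction_on with
    | zero => simp
    | tmul b c => simp [mulPC_tmul]
    | add s t hs ht => simp only [add_tmul, map_add, hs, ht]
  rw [hμ.deltaR_mul, ← hΦ]
  exact congrArg _ (LinearMap.congr_fun hΔ c)

lemma rhoPhi_tmul (hμ : AxMul k P C ψ) (hΔ : IsComoduleMap k P C ψ e Φ) (c : C) (u : P) :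
    rhoPhi k P C ψ Φ Φi (c ⊗ₜ u) = cleftProj k P C ψ e Φi (Φ c * u) := by
  have h : μ k P ∘ₗ map LinearMap.id (μ k P) ∘ₗ map Φ (map LinearMap.id Φi) ∘ₗ
      map LinearMap.id ψ = Theta k P C Φi ∘ₗ mulPC k P C ∘ₗ map Φ ψ := by
    ext b c u
    change Φ b * Theta k P C Φi (ψ (c ⊗ₜ u)) = Theta k P C Φi (mulPC k P C (Φ b ⊗ₜ ψ (c ⊗ₜ u)))
    rw [mulPC_tmul, theta_smul]
  rw [cleftProj, comp_apply, deltaR_Φ_mul hμ hΔ]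
  exact LinearMap.congr_fun h _

lemma rhat_rhoPhi_tmul (hμ : AxMul k P C ψ) (hcomul : AxComul k P C ψ) (he : Δ k C e = e ⊗ₜ[k] e)
    (hΔ : IsComoduleMap k P C ψ e Φ) (c : C) (u : P) :
    rhat k P C ψ (rhoPhi k P C ψ Φ Φi) (c ⊗ₜ u) = ThetaInv k P C ψ e Φi (Φ c * u) := by
  have h : map (rhoPhi k P C ψ Φ Φi) LinearMap.id ∘ₗ
        (TensorProduct.assoc k C P C).symm.toLinearMap ∘ₗ map LinearMap.id ψ =
      map (cleftProj k P C ψ e Φi) LinearMap.id ∘ₗ mulPC k P C ∘ₗ map Φ ψ := by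
    have hw (b : C) (w : P ⊗[k] C) : map (rhoPhi k P C ψ Φ Φi) LinearMap.id
        ((TensorProduct.assoc k C P C).symm (b ⊗ₜ w)) =
        map (cleftProj k P C ψ e Φi) LinearMap.id (Φ b • w) := by
      induction w using TensorProduct.induction_on with
      | zero => simp
      | tmul u c => simp [rhoPhi_tmul hμ hΔ, smul_tmul']
      | add v w hv hw => simp only [tmul_add, smul_add, map_add, hv, hw]
    ext b c u
    simp [hw, mulPC_tmul]
  rw [thetaInv_eq_map_cleftProj hcomul he, deltaR_Φ_mul hμ hΔ]
  exact LinearMap.congr_fun h _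

lemma sigmaPhi_tmul (hcov : CovPhi k P C ψ ψC Φ) (b c : C) :
    sigmaPhi k P C ψC Φ Φi (b ⊗ₜ c) = rhoPhi k P C ψ Φ Φi (b ⊗ₜ Φ c) := by
  have h : map Φ (map Φ Φi) ∘ₗ map LinearMap.id ψC ∘ₗ (TensorProduct.assoc k C C C).toLinearMap =
      map Φ (map LinearMap.id Φi) ∘ₗ map LinearMap.id ψ ∘ₗ
        (TensorProduct.assoc k C C P).toLinearMap ∘ₗ map LinearMap.id Φ := by
    ext a b c
    simp [hcov.psi_tmul, map_map]
  have hb := LinearMap.congr_fun h (Δ k C b ⊗ₜ c)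
  simpa [sigmaPhi, rhoPhi] using congr(μ k P (map LinearMap.id (μ k P) $hb))

lemma shat_sigmaPhi_tmul (hcov : CovPhi k P C ψ ψC Φ) (b c : C) :
    shat k P C ψC (sigmaPhi k P C ψC Φ Φi) (b ⊗ₜ c) =
      rhat k P C ψ (rhoPhi k P C ψ Φ Φi) (b ⊗ₜ Φ c) := by
  have hσ (a : C) (t : C ⊗[k] C) : map (sigmaPhi k P C ψC Φ Φi) LinearMap.id
      ((TensorProduct.assoc k C C C).symm (a ⊗ₜ t)) =
      map (rhoPhi k P C ψ Φ Φi) LinearMap.id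
        ((TensorProduct.assoc k C P C).symm (a ⊗ₜ map Φ LinearMap.id t)) := by
    induction t using TensorProduct.induction_on with
    | zero => simp
    | tmul b c => simp [sigmaPhi_tmul hcov]
    | add s t hs ht => simp only [tmul_add, map_add, hs, ht]
  have h : map (sigmaPhi k P C ψC Φ Φi) LinearMap.id ∘ₗ
        (TensorProduct.assoc k C C C).symm.toLinearMap ∘ₗ map LinearMap.id ψC ∘ₗ
        (TensorProduct.assoc k C C C).toLinearMap =
      map (rhoPhi k P C ψ Φ Φi) LinearMap.id ∘ₗ
        (TensorProduct.assoc k C P C).symm.toLinearMap ∘ₗ map LinearMap.id ψ ∘ₗ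
        (TensorProduct.assoc k C C P).toLinearMap ∘ₗ map LinearMap.id Φ := by
    ext a b c
    simp [hσ, hcov.psi_tmul]
  have hb := LinearMap.congr_fun h (Δ k C b ⊗ₜ c)
  simpa [shat, rhat] using hb

lemma leftExtend_thetaInv (hμ : AxMul k P C ψ) (u : P) {w : P ⊗[k] C}
    (hw : w ∈ MCsub k P C ψ e) :
    leftExtend (ThetaInv k P C ψ e Φi ∘ₗ mulRight k u ∘ₗ Φ) w =
      ThetaInv k P C ψ e Φi (Theta k P C Φ w * u) := by
  obtain ⟨t, rfl⟩ := hw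
  induction t using TensorProduct.induction_on with
  | zero => simp
  | tmul x c => simp [mul_assoc, thetaInv_mul hμ x.2]
  | add s t hs ht => simp only [map_add, add_mul, hs, ht]

lemma mulPC_rhat_rhoPhi (hμ : AxMul k P C ψ) (hcomul : AxComul k P C ψ)
    (he : Δ k C e = e ⊗ₜ[k] e) (hΔ : IsComoduleMap k P C ψ e Φ) {w : P ⊗[k] C}
    (hw : w ∈ MCsub k P C ψ e) (u : P) :
    mulPC k P C (map LinearMap.id (rhat k P C ψ (rhoPhi k P C ψ Φ Φi))
        (TensorProduct.assoc k P C P (w ⊗ₜ u))) =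
      ThetaInv k P C ψ e Φi (Theta k P C Φ w * u) := by
  rw [← leftExtend_thetaInv hμ u hw]
  clear hw
  induction w using TensorProduct.induction_on with
  | zero => simp
  | tmul x c => simp [mulPC_tmul, rhat_rhoPhi_tmul hμ hcomul he hΔ]
  | add v w hv hw => simp only [add_tmul, map_add, hv, hw]

lemma mulPC_shat_sigmaPhi (hcov : CovPhi k P C ψ ψC Φ) (hμ : AxMul k P C ψ)
    (hcomul : AxComul k P C ψ) (he : Δ k C e = e ⊗ₜ[k] e) (hΔ : IsComoduleMap k P C ψ e Φ)
    {w : P ⊗[k] C} (hw : w ∈ MCsub k P C ψ e) (c : C) :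
    mulPC k P C (map LinearMap.id (shat k P C ψC (sigmaPhi k P C ψC Φ Φi))
        (TensorProduct.assoc k P C C (w ⊗ₜ c))) =
      ThetaInv k P C ψ e Φi (Theta k P C Φ w * Φ c) := by
  rw [← mulPC_rhat_rhoPhi hμ hcomul he hΔ hw]
  clear hw
  induction w using TensorProduct.induction_on with
  | zero => simp
  | tmul x b => simp [shat_sigmaPhi_tmul hcov]
  | add v w hv hw => simp only [add_tmul, map_add, hv, hw]

variable (k P C ψ ψC Φ Φi) in
/-- The multiplication of the crossed product `M ×_Φ C`, on all of `P ⊗ C`. -/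
abbrev crossedMul : (P ⊗[k] C) ⊗[k] (P ⊗[k] C) →ₗ[k] P ⊗[k] C :=
  prodX k P C ψ ψC (rhoPhi k P C ψ Φ Φi) (sigmaPhi k P C ψC Φ Φi)

lemma cleftProd_tmul (hμ : AxMul k P C ψ) (hΔ : IsComoduleMap k P C ψ e Φ)
    (hcov : CovPhi k P C ψ ψC Φ) (x : P) (b : C) (v : P ⊗[k] C) :
    cleftProd k P C ψ ψC Φ Φi ((x ⊗ₜ b) ⊗ₜ v) =
      x • ThetaInv k P C ψ e Φi (Φ b * Theta k P C Φ v) := by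
  have hconv (w : (P ⊗[k] C) ⊗[k] C) :
      mulPC k P C (map (Theta k P C Φ) (map Φi LinearMap.id ∘ₗ Δ k C) w) =
        convAction (toConv Φi) (map (Theta k P C Φ) LinearMap.id w) := by
    induction w using TensorProduct.induction_on with
    | zero => simp
    | tmul u c => simp [mulPC_tmul]
    | add v w hv hw => simp only [map_add, hv, hw]
  rw [thetaInv_eq_convAction, deltaR_Φ_mul hμ hΔ]
  simp only [cleftProd, comp_apply, LinearEquiv.coe_coe, map_tmul, id_apply]
  induction Δ k C b using TensorProduct.induction_on with
  | zero => simp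
  | tmul a b =>
    have hab := hconv (moveThrough12 k P C ψ ψC (b ⊗ₜ v))
    rw [map_theta_moveThrough12 hμ hcov] at hab
    simp only [assoc_tmul, assoc_symm_tmul, map_tmul, id_apply, mulPC_tmul, theta_tmul, hab,
      map_smul, mul_smul]
  | add s t hs ht => simp only [add_tmul, tmul_add, map_add, smul_add, hs, ht]

section Multiplicativity

variable (hψ : IsEntwining k P C ψ) (he : IsGrouplike k C e)
  (hΔ : IsComoduleMap k P C ψ e Φ) (hcov : CovPhi k P C ψ ψC Φ) (hΦ : ConvInv k P C Φ Φi)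

include hψ he hΔ hcov hΦ

lemma crossedMul_tmul (x : P) (b : C) (v : P ⊗[k] C) :
    crossedMul k P C ψ ψC Φ Φi ((x ⊗ₜ b) ⊗ₜ v) =
      x • ThetaInv k P C ψ e Φi (Φ b * Theta k P C Φ v) := by
  obtain ⟨hμ, hone, hcomul, hcounit⟩ := hψ
  induction v using TensorProduct.induction_on with
  | zero => simp
  | tmul y c =>
    have hmem := thetaInv_mem hone hμ hcomul he.1 hΔ hΦ (Φ b * y)
    have hprod := mulPC_shat_sigmaPhi (Φi := Φi) hcov hμ hcomul he.1 hΔ hmem c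
    rw [theta_thetaInv hcounit he.2 hΦ] at hprod
    simp [prodX, mulPC_tmul, rhat_rhoPhi_tmul hμ hcomul he.1 hΔ, hprod, mul_assoc]
  | add v w hv hw => simp only [tmul_add, map_add, mul_add, smul_add, hv, hw]

lemma crossedMul_eq_cleftProd :
    crossedMul k P C ψ ψC Φ Φi = cleftProd k P C ψ ψC Φ Φi :=
  TensorProduct.ext' fun u v => by
    induction u using TensorProduct.induction_on with
    | zero => simp
    | tmul x b => rw [crossedMul_tmul hψ he hΔ hcov hΦ, cleftProd_tmul hψ.1 hΔ hcov]
    | add s t hs ht => simp only [add_tmul, map_add, hs, ht]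

lemma theta_crossedMul (u v : P ⊗[k] C) :
    Theta k P C Φ (crossedMul k P C ψ ψC Φ Φi (u ⊗ₜ v)) =
      Theta k P C Φ u * Theta k P C Φ v := by
  induction u using TensorProduct.induction_on with
  | zero => simp
  | tmul x b =>
    rw [crossedMul_tmul hψ he hΔ hcov hΦ, theta_smul, theta_thetaInv hψ.2.2.2 he.2 hΦ,
      theta_tmul, mul_assoc]
  | add s t hs ht => simp only [add_tmul, map_add, add_mul, hs, ht]

lemma crossedMul_eq_of_mem {u : P ⊗[k] C} (hu : u ∈ MCsub k P C ψ e) (v : P ⊗[k] C) :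
    crossedMul k P C ψ ψC Φ Φi (u ⊗ₜ v) =
      ThetaInv k P C ψ e Φi (Theta k P C Φ u * Theta k P C Φ v) := by
  obtain ⟨t, rfl⟩ := hu
  induction t using TensorProduct.induction_on with
  | zero => simp
  | tmul x b =>
    rw [map_tmul, id_apply, crossedMul_tmul hψ he hΔ hcov hΦ, theta_tmul, mul_assoc,
      Submodule.subtype_apply, thetaInv_mul hψ.1 x.2]
  | add s t hs ht => simp only [add_tmul, map_add, add_mul, hs, ht]

lemma crossedMul_smul_left (x : P) (u v : P ⊗[k] C) :
    crossedMul k P C ψ ψC Φ Φi ((x • u) ⊗ₜ v) = x • crossedMul k P C ψ ψC Φ Φi (u ⊗ₜ v) := by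
  induction u using TensorProduct.induction_on with
  | zero => simp
  | tmul y b =>
    rw [smul_tmul', smul_eq_mul, crossedMul_tmul hψ he hΔ hcov hΦ,
      crossedMul_tmul hψ he hΔ hcov hΦ, mul_smul]
  | add s t hs ht => simp only [smul_add, add_tmul, map_add, hs, ht]

lemma crossedMul_assoc (u v w : P ⊗[k] C) :
    crossedMul k P C ψ ψC Φ Φi (crossedMul k P C ψ ψC Φ Φi (u ⊗ₜ v) ⊗ₜ w) =
      crossedMul k P C ψ ψC Φ Φi (u ⊗ₜ crossedMul k P C ψ ψC Φ Φi (v ⊗ₜ w)) := by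
  induction u using TensorProduct.induction_on with
  | zero => simp
  | tmul x b =>
    have hmem := thetaInv_mem hψ.2.1 hψ.1 hψ.2.2.1 he.1 hΔ hΦ (Φ b * Theta k P C Φ v)
    rw [crossedMul_tmul hψ he hΔ hcov hΦ, crossedMul_smul_left hψ he hΔ hcov hΦ,
      crossedMul_eq_of_mem hψ he hΔ hcov hΦ hmem, theta_thetaInv hψ.2.2.2 he.2 hΦ,
      crossedMul_tmul hψ he hΔ hcov hΦ, theta_crossedMul hψ he hΔ hcov hΦ, mul_assoc]
  | add s t hs ht => simp only [add_tmul, map_add, hs, ht]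

end Multiplicativity

lemma condI_rhoPhi (hμ : AxMul k P C ψ) (hΔ : IsComoduleMap k P C ψ e Φ) (hΦ : ConvInv k P C Φ Φi)
    (hε : ε k C e = 1) (hΦe : Φ e = 1) : CondI k P C ψ e (rhoPhi k P C ψ Φ Φi) := by
  refine ⟨fun x hx => ?_, fun c => ?_⟩
  · rw [rhoPhi_tmul hμ hΔ, hΦe, one_mul]
    simpa [cleftProj_one hΔ hΦ hε hΦe] using cleftProj_mul (Φi := Φi) hμ hx 1
  · rw [rhoPhi_tmul hμ hΔ, mul_one, cleftProj_Φ hΔ hΦ]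

lemma condII_rhoPhi (hone : AxOne k P C ψ) (hμ : AxMul k P C ψ) (hcomul : AxComul k P C ψ)
    (he : Δ k C e = e ⊗ₜ[k] e) (hΔ : IsComoduleMap k P C ψ e Φ) (hΦ : ConvInv k P C Φ Φi) :
    CondII k P C ψ e (rhoPhi k P C ψ Φ Φi) := fun c x _ => by
  rw [rhat_rhoPhi_tmul hμ hcomul he hΔ]
  exact thetaInv_mem hone hμ hcomul he hΔ hΦ _

lemma condIII_rhoPhi (hψ : IsEntwining k P C ψ) (he : IsGrouplike k C e)
    (hΔ : IsComoduleMap k P C ψ e Φ) (hΦ : ConvInv k P C Φ Φi) :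
    CondIII k P C ψ e (rhoPhi k P C ψ Φ Φi) := fun c x y _ _ => by
  obtain ⟨hμ, hone, hcomul, hcounit⟩ := hψ
  have hmem := thetaInv_mem hone hμ hcomul he.1 hΔ hΦ (Φ c * x)
  have hprod := mulPC_rhat_rhoPhi (Φi := Φi) hμ hcomul he.1 hΔ hmem y
  rw [theta_thetaInv hcounit he.2 hΦ] at hprod
  simp [BmapIII, rhat_rhoPhi_tmul hμ hcomul he.1 hΔ, hprod, mul_assoc]

lemma sigmaIntoM_sigmaPhi (hone : AxOne k P C ψ) (hμ : AxMul k P C ψ) (hcomul : AxComul k P C ψ)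
    (he : Δ k C e = e ⊗ₜ[k] e) (hΔ : IsComoduleMap k P C ψ e Φ) (hcov : CovPhi k P C ψ ψC Φ)
    (hΦ : ConvInv k P C Φ Φi) : SigmaIntoM k P C ψ e (sigmaPhi k P C ψC Φ Φi) := fun b c => by
  rw [sigmaPhi_tmul hcov, rhoPhi_tmul hμ hΔ]
  exact cleftProj_mem hone hμ hcomul he hΔ hΦ _

lemma condIV_sigmaPhi (hμ : AxMul k P C ψ) (hcomul : AxComul k P C ψ) (he : Δ k C e = e ⊗ₜ[k] e)
    (hΔ : IsComoduleMap k P C ψ e Φ) (hcov : CovPhi k P C ψ ψC Φ) (hΦ : ConvInv k P C Φ Φi)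
    (hΦe : Φ e = 1) : CondIV k P C e ψC (sigmaPhi k P C ψC Φ Φi) := by
  refine ⟨fun c => ?_, fun c => ?_⟩
  · rw [sigmaPhi_tmul hcov, rhoPhi_tmul hμ hΔ, hΦe, one_mul, cleftProj_Φ hΔ hΦ]
  · rw [shat_sigmaPhi_tmul hcov, rhat_rhoPhi_tmul hμ hcomul he hΔ, hΦe, mul_one,
      thetaInv_eq_convAction, hΔ.deltaR_apply, hΦ.convAction_inv_convAction]

lemma isCrossedData_rhoPhi_sigmaPhi (hψ : IsEntwining k P C ψ) (he : IsGrouplike k C e)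
    (hΔ : IsComoduleMap k P C ψ e Φ) (hcov : CovPhi k P C ψ ψC Φ) (hΦ : ConvInv k P C Φ Φi)
    (hΦe : Φ e = 1) :
    IsCrossedData k P C ψ e ψC (rhoPhi k P C ψ Φ Φi) (sigmaPhi k P C ψC Φ Φi) :=
  have ⟨hμ, hone, hcomul, _⟩ := hψ
  ⟨condI_rhoPhi hμ hΔ hΦ he.2 hΦe,
    condII_rhoPhi hone hμ hcomul he.1 hΔ hΦ,
    condIII_rhoPhi hψ he hΔ hΦ,
    sigmaIntoM_sigmaPhi hone hμ hcomul he.1 hΔ hcov hΦ,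
    condIV_sigmaPhi hμ hcomul he.1 hΔ hcov hΦ hΦe⟩

theorem cleft_extension_general (hψ : IsEntwining k P C ψ) (he : IsGrouplike k C e)
    (hΔ : IsComoduleMap k P C ψ e Φ) (hcov : CovPhi k P C ψ ψC Φ) (hΦ : ConvInv k P C Φ Φi)
    (hΦe : Φ e = 1) :
    IsCrossedData k P C ψ e ψC (rhoPhi k P C ψ Φ Φi) (sigmaPhi k P C ψC Φ Φi) ∧
    crossedMul k P C ψ ψC Φ Φi = cleftProd k P C ψ ψC Φ Φi ∧
    (∀ u v w : P ⊗[k] C,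
      crossedMul k P C ψ ψC Φ Φi (crossedMul k P C ψ ψC Φ Φi (u ⊗ₜ v) ⊗ₜ w) =
        crossedMul k P C ψ ψC Φ Φi (u ⊗ₜ crossedMul k P C ψ ψC Φ Φi (v ⊗ₜ w))) ∧
    (∀ u v : P ⊗[k] C, Theta k P C Φ (crossedMul k P C ψ ψC Φ Φi (u ⊗ₜ v)) =
      Theta k P C Φ u * Theta k P C Φ v) ∧
    (∀ u : P, Theta k P C Φ (ThetaInv k P C ψ e Φi u) = u) ∧
    ∀ w ∈ MCsub k P C ψ e, ThetaInv k P C ψ e Φi (Theta k P C Φ w) = w :=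
  ⟨isCrossedData_rhoPhi_sigmaPhi hψ he hΔ hcov hΦ hΦe, crossedMul_eq_cleftProd hψ he hΔ hcov hΦ,
    crossedMul_assoc hψ he hΔ hcov hΦ, theta_crossedMul hψ he hΔ hcov hΦ,
    theta_thetaInv hψ.2.2.2 he.2 hΦ, fun _ => thetaInv_theta hψ.1 hΔ hΦ⟩

end CrossedProduct

/-- (Example 2.3) A convolution invertible `Φ` with `Φ(e) = 1`
intertwining `ψ` and `ψ^C` yields crossed product data
`ρ(c⊗u) = Φ(c₍₁₎)u_αΦ⁻¹(c₍₂₎^α)`, `σ(b⊗c) = Φ(b₍₁₎)Φ(c_A)Φ⁻¹(b₍₂₎^A)`; the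
resulting crossed product `M ×_Φ C` has the explicit product (2.18), is
associative, and is isomorphic to `P` via `Θ(x ⊗ c) = xΦ(c)`. -/
theorem cleft_extension
    (hdata : IsEntwiningData k P C ψ e ψC)
    (hconv : ConvInv k P C Φ Φi)
    (hΦe : Φ e = 1)
    (hcov : CovPhi k P C ψ ψC Φ) :
    IsCrossedData k P C ψ e ψC (rhoPhi k P C ψ Φ Φi) (sigmaPhi k P C ψC Φ Φi) ∧
    (∀ x y : P, x ∈ Msub k P C ψ e → y ∈ Msub k P C ψ e → ∀ b c : C,
      prodX k P C ψ ψC (rhoPhi k P C ψ Φ Φi) (sigmaPhi k P C ψC Φ Φi)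
          ((x ⊗ₜ b) ⊗ₜ (y ⊗ₜ c)) =
        cleftProd k P C ψ ψC Φ Φi ((x ⊗ₜ b) ⊗ₜ (y ⊗ₜ c))) ∧
    (∀ u ∈ MCsub k P C ψ e, ∀ v ∈ MCsub k P C ψ e, ∀ w ∈ MCsub k P C ψ e,
      prodX k P C ψ ψC (rhoPhi k P C ψ Φ Φi) (sigmaPhi k P C ψC Φ Φi)
          (prodX k P C ψ ψC (rhoPhi k P C ψ Φ Φi) (sigmaPhi k P C ψC Φ Φi)
            (u ⊗ₜ v) ⊗ₜ w) =
        prodX k P C ψ ψC (rhoPhi k P C ψ Φ Φi) (sigmaPhi k P C ψC Φ Φi)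
          (u ⊗ₜ prodX k P C ψ ψC (rhoPhi k P C ψ Φ Φi) (sigmaPhi k P C ψC Φ Φi)
            (v ⊗ₜ w))) ∧
    (∀ u ∈ MCsub k P C ψ e, ∀ v ∈ MCsub k P C ψ e,
      Theta k P C Φ
          (prodX k P C ψ ψC (rhoPhi k P C ψ Φ Φi) (sigmaPhi k P C ψC Φ Φi)
            (u ⊗ₜ v)) =
        Theta k P C Φ u * Theta k P C Φ v) ∧
    (∀ u : P, Theta k P C Φ (ThetaInv k P C ψ e Φi u) = u) ∧
    (∀ w ∈ MCsub k P C ψ e, ThetaInv k P C ψ e Φi (Theta k P C Φ w) = w) := by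
  obtain ⟨hψ, he, -, -, hψC⟩ := hdata
  obtain ⟨hdata, hprod, hassoc, hmul, hinv⟩ :=
    cleft_extension_general hψ he (hcov.isComoduleMap hψC) hcov hconv hΦe
  exact ⟨hdata, fun _ _ _ _ _ _ => LinearMap.congr_fun hprod _, fun _ _ _ _ _ _ => hassoc _ _ _,
    fun _ _ _ _ => hmul _ _, hinv⟩

end Stmt12

end Entwine
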